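/- arXiv:2011.11165 — 3 statements merged into one kernel-verified Lean document; each statement's English description precedes it below -/
import Mathlib

section
/- Let A = ℂ[ℤ/2] be the group algebra of ℤ/2 over ℂ (the algebra MonoidAlgebra ℂ (ZMod 2), i.e. ℂ[x]/(x² = 1)), and let τ : A ≃ A be the ℂ-algebra automorphism induced by the nontrivial character of ℤ/2, i.e. τ fixes 1 and sends the generator x to −x. Then there exists a ℂ-algebra isomorphism e : A ⊗[ℂ] A ≅ A × A which intertwines the diagonal automorphism τ ⊗ τ of A ⊗[ℂ] A with the componentwise automorphism τ × τ of A × A, i.e. e ∘ (τ ⊗ τ) = (τ × τ) ∘ e. -/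
open scoped TensorProduct

/-- The group algebra `A = ℂ[ℤ/2] = ℂ[x]/(x² = 1)`. -/
abbrev GroupAlgZ2 : Type := MonoidAlgebra ℂ (Multiplicative (ZMod 2))

/-- The generator `x` of the group algebra `ℂ[ℤ/2]`. -/
noncomputable abbrev GroupAlgZ2.x : GroupAlgZ2 :=
  MonoidAlgebra.single (Multiplicative.ofAdd (1 : ZMod 2)) 1

/-- Let `τ : ℂ[ℤ/2] ≃ ℂ[ℤ/2]` be the algebra automorphism induced by the
nontrivial character of `ℤ/2`, i.e. `τ 1 = 1` and `τ x = -x`.  Then there is a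
ℂ-algebra isomorphism `e : A ⊗[ℂ] A ≅ A × A` intertwining `τ ⊗ τ` with the
componentwise automorphism `τ × τ`. -/
theorem cheshire_fusion_rule
    (τ : GroupAlgZ2 ≃ₐ[ℂ] GroupAlgZ2)
    (hτ : τ GroupAlgZ2.x = - GroupAlgZ2.x) :
    ∃ e : (GroupAlgZ2 ⊗[ℂ] GroupAlgZ2) ≃ₐ[ℂ] (GroupAlgZ2 × GroupAlgZ2),
      ∀ a, e ((Algebra.TensorProduct.congr τ τ) a) = (τ (e a).1, τ (e a).2) := by
  have hxx : GroupAlgZ2.x * GroupAlgZ2.x = 1 := by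
    rw [MonoidAlgebra.single_mul_single, MonoidAlgebra.one_def, ← ofAdd_add, mul_one]
    rfl
  let f : (GroupAlgZ2 ⊗[ℂ] GroupAlgZ2) →ₐ[ℂ] (GroupAlgZ2 × GroupAlgZ2) :=
    AlgHom.prod (Algebra.TensorProduct.lmul' ℂ)
      ((Algebra.TensorProduct.lmul' ℂ).comp
        (Algebra.TensorProduct.map (AlgHom.id ℂ GroupAlgZ2) τ.toAlgHom))
  have hf : ∀ a b, f (a ⊗ₜ b) = (a * b, a * τ b) := fun a b => by
    simp [f]
  have hsurj : Function.Surjective f := by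
    rintro ⟨a, b⟩
    refine ⟨((1 / 2 : ℂ) • (a + b)) ⊗ₜ 1 +
      (((1 / 2 : ℂ) • (a - b)) * GroupAlgZ2.x) ⊗ₜ GroupAlgZ2.x, ?_⟩
    rw [map_add, hf, hf, hτ, map_one, mul_neg, mul_assoc, hxx, mul_one, mul_one]
    ext1
    · simp only [Prod.mk_add_mk]
      module
    · simp only [Prod.mk_add_mk]
      module
  have hA : Module.finrank ℂ GroupAlgZ2 = 2 := by
    have b : Module.Basis (Multiplicative (ZMod 2)) ℂ GroupAlgZ2 :=
      ⟨MonoidAlgebra.coeffLinearEquiv ℂ⟩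
    rw [Module.finrank_eq_card_basis b]
    rfl
  have : Module.Finite ℂ GroupAlgZ2 := Module.finite_of_finrank_pos (by omega)
  have hdim : Module.finrank ℂ (GroupAlgZ2 ⊗[ℂ] GroupAlgZ2) =
      Module.finrank ℂ (GroupAlgZ2 × GroupAlgZ2) := by
    rw [Module.finrank_tensorProduct, Module.finrank_prod, hA]
  have hinj : Function.Injective f :=
    (LinearMap.injective_iff_surjective_of_finrank_eq_finrank (f := f.toLinearMap) hdim).2 hsurj
  refine ⟨AlgEquiv.ofBijective f ⟨hinj, hsurj⟩, fun a => ?_⟩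
  change f _ = (τ (f a).1, τ (f a).2)
  induction a using TensorProduct.induction_on with
  | zero => simp; rfl
  | tmul a b =>
    rw [Algebra.TensorProduct.congr_apply, Algebra.TensorProduct.map_tmul]
    simp [hf]
  | add a b ha hb =>
    rw [map_add, map_add, ha, hb]
    simp
end

section
/- Let A = ℂ[ℤ/2] be the group algebra of ℤ/2 over ℂ (the algebra MonoidAlgebra ℂ (ZMod 2), i.e. ℂ[x]/(x² = 1)), and let τ : A ≃ A be the ℂ-algebra automorphism induced by the nontrivial character of ℤ/2, i.e. τ fixes 1 and sends the generator x to −x. Then the only ideals I of A satisfying τ(I) = I are the zero ideal and A itself. -/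
/-- Let `τ : ℂ[ℤ/2] ≃ ℂ[ℤ/2]` be the algebra automorphism induced by the
nontrivial character of `ℤ/2`, i.e. `τ 1 = 1` and `τ x = -x`.  The only ideals
`I` of `A = ℂ[ℤ/2]` with `τ(I) = I` are the zero ideal and `A` itself. -/
theorem cheshire_algebra_equivariantly_simple
    (τ : GroupAlgZ2 ≃ₐ[ℂ] GroupAlgZ2)
    (hτ : τ GroupAlgZ2.x = - GroupAlgZ2.x) :
    ∀ I : Ideal GroupAlgZ2, Ideal.map τ I = I → I = ⊥ ∨ I = ⊤ := by
  intro I hI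
  by_cases hb : I = ⊥
  · exact Or.inl hb
  right
  obtain ⟨f, hf, hf0⟩ := Submodule.exists_mem_ne_zero_of_ne_bot hb
  have hxx : GroupAlgZ2.x * GroupAlgZ2.x = 1 := by
    rw [MonoidAlgebra.single_mul_single, MonoidAlgebra.one_def, mul_one]
    congr 1
  have hdec : ∃ a b : ℂ, f = algebraMap ℂ GroupAlgZ2 a + algebraMap ℂ GroupAlgZ2 b * GroupAlgZ2.x := by
    clear hf hf0
    induction f using MonoidAlgebra.induction_linear with
    | zero => exact ⟨0, 0, by simp⟩
    | add f g hf hg =>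
      obtain ⟨a, b, rfl⟩ := hf
      obtain ⟨c, d, rfl⟩ := hg
      exact ⟨a + c, b + d, by simp only [map_add]; ring⟩
    | single g r =>
      have hg : g = 1 ∨ g = Multiplicative.ofAdd (1 : ZMod 2) := by
        revert g; decide
      rcases hg with rfl | rfl
      · exact ⟨r, 0, by simp⟩
      · exact ⟨0, r, by simp [MonoidAlgebra.single_mul_single]⟩
  obtain ⟨a, b, rfl⟩ := hdec
  have h2 := Ideal.mem_map_of_mem τ hf
  rw [hI, map_add, map_mul, hτ, τ.commutes, τ.commutes] at h2
  have key : ∀ c : ℂ, c ≠ 0 → algebraMap ℂ GroupAlgZ2 (2 * c) ∈ I → I = ⊤ := by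
    intro c hc h
    refine Ideal.eq_top_of_isUnit_mem I h (IsUnit.map _ ?_)
    exact (mul_ne_zero two_ne_zero hc).isUnit
  by_cases ha : a = 0
  · have hb' : b ≠ 0 := by
      rintro rfl
      apply hf0
      simp [ha]
    apply key b hb'
    have h3 := I.mul_mem_left GroupAlgZ2.x (I.sub_mem hf h2)
    have e : algebraMap ℂ GroupAlgZ2 (2 * b) = GroupAlgZ2.x * (algebraMap ℂ GroupAlgZ2 a + algebraMap ℂ GroupAlgZ2 b * GroupAlgZ2.x - (algebraMap ℂ GroupAlgZ2 a + algebraMap ℂ GroupAlgZ2 b * -GroupAlgZ2.x)) := by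
      rw [map_mul, map_ofNat]
      linear_combination (-2 * algebraMap ℂ GroupAlgZ2 b) * hxx
    rw [e]; exact h3
  · apply key a ha
    have h3 := I.add_mem hf h2
    have e : algebraMap ℂ GroupAlgZ2 (2 * a) = (algebraMap ℂ GroupAlgZ2 a + algebraMap ℂ GroupAlgZ2 b * GroupAlgZ2.x + (algebraMap ℂ GroupAlgZ2 a + algebraMap ℂ GroupAlgZ2 b * -GroupAlgZ2.x)) := by
      rw [map_mul, map_ofNat]
      ring
    rw [e]; exact h3
end

section
/- Let A be a nonzero finite-dimensional ℂ-algebra equipped with a ℤ/2-grading A = A₀ ⊕ A₁ (a GradedAlgebra structure indexed by ZMod 2), and suppose that every nonzero homogeneous element of A is a unit. Then the even part A₀ is one-dimensional, spanned by 1, the odd part A₁ has dimension at most 1, and if A₁ ≠ 0 then A₁ contains an element e with e² = 1. -/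
/-- Let `A` be a nonzero finite-dimensional ℂ-algebra with a `ℤ/2`-grading
`A = A₀ ⊕ A₁` in which every nonzero homogeneous element is a unit (a
super division algebra over `ℂ`).  Then the even part `A₀` is one-dimensional,
spanned by `1`; the odd part `A₁` has dimension at most `1`; and if `A₁ ≠ 0`
then `A₁` contains an element `e` with `e ^ 2 = 1`. -/
theorem super_division_algebra_over_complex
    (A : Type*) [Ring A] [Algebra ℂ A] [Nontrivial A] [FiniteDimensional ℂ A]
    (𝒜 : ZMod 2 → Submodule ℂ A) [GradedAlgebra 𝒜]
    (hunit : ∀ i : ZMod 2, ∀ a ∈ 𝒜 i, a ≠ 0 → IsUnit a) :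
    𝒜 0 = Submodule.span ℂ {(1 : A)} ∧
    Module.finrank ℂ (𝒜 1) ≤ 1 ∧
    (𝒜 1 ≠ ⊥ → ∃ e ∈ 𝒜 1, e ^ 2 = 1) := by
  have heven : ∀ a ∈ 𝒜 0, ∃ c : ℂ, a = c • (1 : A) := by
    intro a ha
    obtain ⟨c, hc⟩ := spectrum.nonempty_of_isAlgClosed_of_finiteDimensional ℂ a
    refine ⟨c, ?_⟩
    by_contra hne
    apply hc
    rw [spectrum.mem_resolventSet_iff, Algebra.algebraMap_eq_smul_one]
    refine hunit 0 _ (Submodule.sub_mem _ (Submodule.smul_mem _ _ (SetLike.one_mem_graded 𝒜)) ha) ?_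
    intro h
    exact hne (sub_eq_zero.mp h).symm
  have hmul : ∀ a ∈ 𝒜 1, ∀ b ∈ 𝒜 1, ∃ c : ℂ, a * b = c • (1 : A) := by
    intro a ha b hb
    exact heven _ (by
      have h := SetLike.mul_mem_graded ha hb
      rwa [show (1 : ZMod 2) + 1 = 0 from by decide] at h)
  have hodd : ∀ u ∈ 𝒜 1, u ≠ 0 → ∃ c : ℂ, c ≠ 0 ∧ u * u = c • (1 : A) := by
    intro u hu hu0
    obtain ⟨c, hc⟩ := hmul u hu u hu
    refine ⟨c, ?_, hc⟩
    rintro rfl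
    have hU := hunit 1 u hu hu0
    rw [zero_smul] at hc
    exact hu0 (hU.mul_right_eq_zero.mp hc)
  refine ⟨?_, ?_, ?_⟩
  · apply le_antisymm
    · intro a ha
      obtain ⟨c, rfl⟩ := heven a ha
      exact Submodule.smul_mem _ _ (Submodule.mem_span_singleton_self _)
    · rw [Submodule.span_singleton_le_iff_mem]
      exact SetLike.one_mem_graded 𝒜
  · by_cases hbot : 𝒜 1 = ⊥
    · rw [hbot]; simp
    · obtain ⟨u, hu, hu0⟩ := Submodule.exists_mem_ne_zero_of_ne_bot hbot
      obtain ⟨c, hc0, hc⟩ := hodd u hu hu0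
      refine finrank_le_one (⟨u, hu⟩ : 𝒜 1) ?_
      rintro ⟨v, hv⟩
      obtain ⟨d, hd⟩ := hmul u hu v hv
      refine ⟨d / c, Subtype.ext ?_⟩
      change (d / c) • u = v
      apply (hunit 1 u hu hu0).mul_left_cancel
      rw [mul_smul_comm, hc, hd, smul_smul, div_mul_cancel₀ _ hc0]
  · intro hbot
    obtain ⟨u, hu, hu0⟩ := Submodule.exists_mem_ne_zero_of_ne_bot hbot
    obtain ⟨c, hc0, hc⟩ := hodd u hu hu0
    obtain ⟨s, hs⟩ := IsAlgClosed.exists_pow_nat_eq c (n := 2) (by norm_num)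
    refine ⟨s⁻¹ • u, Submodule.smul_mem _ _ hu, ?_⟩
    rw [smul_pow, pow_two u, hc, smul_smul, inv_pow, hs, inv_mul_cancel₀ hc0, one_smul]
end
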